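/- arXiv:2510.11265 — 3 statements merged into one kernel-verified Lean document; each statement's English description precedes it below -/
import Mathlib

section
/- Let T be a tree on n ≥ 2 vertices with diameter d and p pendant vertices. Then the induced matching number of T satisfies im(T) ≥ ⌊(n − p + d + 5)/6⌋. -/
open SimpleGraph

/-- An induced matching in `G`: a set of edges of `G` that are pairwise vertex-disjoint
and such that no edge of `G` joins endpoints of two distinct edges. -/
def SimpleGraph.IsInducedMatching {V : Type*} (G : SimpleGraph V) (M : Finset (Sym2 V)) : Prop :=
  (∀ e ∈ M, e ∈ G.edgeSet) ∧
    ∀ e ∈ M, ∀ f ∈ M, e ≠ f → ∀ u ∈ e, ∀ v ∈ f, u ≠ v ∧ ¬ G.Adj u v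

/-- The induced matching number of `G`: the maximum size of an induced matching. -/
noncomputable def SimpleGraph.inducedMatchingNum {V : Type*} (G : SimpleGraph V) : ℕ :=
  sSup {n | ∃ M : Finset (Sym2 V), G.IsInducedMatching M ∧ M.card = n}

/-- The number of pendant vertices (leaves, i.e. vertices of degree one) of `G`. -/
noncomputable def SimpleGraph.pendantCount {V : Type*} [Fintype V] (G : SimpleGraph V)
    [DecidableRel G.Adj] : ℕ :=
  {v : V | G.degree v = 1}.ncard

/-!
Root the tree `T` at a leaf `r`. Every vertex that is not a leaf has a child, and so does `r`, which
makes `n - p + 1` vertices with a child; choose for each of them an edge to one of its children. Two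
such edges whose upper ends have depths congruent modulo `3` are neither incident nor joined by an
edge: if the depths differ, they are too far apart, and if the depths are equal, an incidence or a
joining edge would give some vertex two parents. Hence the most popular residue class yields
`3 * im(T) ≥ n - p + 1`. The interior vertices of a diametral path are not leaves, so
`d ≤ n - p + 1`, and therefore `n - p + d + 1 ≤ 2 * (n - p + 1) ≤ 6 * im(T)`, where `im(T)` is an
integer.
-/

section InducedMatching

open Finset

variable {V ι : Type*} {G : SimpleGraph V} [Finite V]

theorem card_le_inducedMatchingNum {M : Finset (Sym2 V)} (hM : G.IsInducedMatching M) :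
    #M ≤ G.inducedMatchingNum := by
  have := Fintype.ofFinite V
  refine le_csSup ⟨Fintype.card (Sym2 V), ?_⟩ ⟨M, hM, rfl⟩
  rintro _ ⟨N, -, rfl⟩
  exact N.card_le_univ

theorem card_le_inducedMatchingNum_of_pairwise {s : Finset ι} {e : ι → Sym2 V}
    (he : ∀ i ∈ s, e i ∈ G.edgeSet)
    (hsep : ∀ i ∈ s, ∀ j ∈ s, i ≠ j → ∀ a ∈ e i, ∀ b ∈ e j, a ≠ b ∧ ¬ G.Adj a b) :
    #s ≤ G.inducedMatchingNum := by
  classical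
  have e_injOn : Set.InjOn e s := by
    intro i hi j hj hij
    by_contra hne
    have fst_mem := (e i).out_fst_mem
    exact (hsep i hi j hj hne _ fst_mem _ (hij ▸ fst_mem)).1 rfl
  rw [← card_image_of_injOn e_injOn]
  refine card_le_inducedMatchingNum ⟨forall_mem_image.2 he, ?_⟩
  simp only [forall_mem_image]
  exact fun i hi j hj hne => hsep i hi j hj (ne_of_apply_ne e hne)

end InducedMatching

section Child

open Finset

variable {V : Type*} {G : SimpleGraph V} {r u v w x : V}

/-- `IsChild G r v w` says that `w` is a child of `v` when the component of `r` in `G` is rooted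
at `r`, the depth of a vertex being its distance to `r`. -/
def IsChild (G : SimpleGraph V) (r v w : V) : Prop :=
  G.Adj v w ∧ G.dist r w = G.dist r v + 1

theorem IsChild.reachable (h : IsChild G r v w) : G.Reachable r v :=
  (Reachable.of_dist_ne_zero (by have := h.2; omega)).trans h.1.symm.reachable

theorem IsChild.parent_unique (hG : G.IsAcyclic) (hu : IsChild G r u w) (hv : IsChild G r v w) :
    u = v := by
  obtain ⟨p, -, hp⟩ := hu.reachable.exists_path_of_dist
  obtain ⟨q, -, hq⟩ := hv.reachable.exists_path_of_dist
  have hpw : (p.concat hu.1).IsPath :=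
    Walk.isPath_of_length_eq_dist _ (by rw [Walk.length_concat, hp, hu.2])
  have hqw : (q.concat hv.1).IsPath :=
    Walk.isPath_of_length_eq_dist _ (by rw [Walk.length_concat, hq, hv.2])
  have concat_eq : p.concat hu.1 = q.concat hv.1 :=
    congrArg Subtype.val ((hG.subsingleton_path r w).elim ⟨_, hpw⟩ ⟨_, hqw⟩)
  simpa only [Walk.penultimate_concat] using congrArg Walk.penultimate concat_eq

theorem isChild_or_isChild_of_adj (hG : G.IsAcyclic) (hr : G.Reachable r v) (h : G.Adj v w) :
    IsChild G r v w ∨ IsChild G r w v :=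
  (hG.dist_eq_dist_add_one_of_adj_of_reachable r h hr).symm.imp (⟨h, ·⟩) (⟨h.symm, ·⟩)

theorem exists_isChild_root [Nontrivial V] (hG : G.Connected) (r : V) : ∃ w, IsChild G r r w := by
  obtain ⟨w, hw⟩ := hG.preconnected.exists_adj_of_nontrivial r
  exact ⟨w, hw, by rw [dist_self, dist_eq_one_iff_adj.2 hw]⟩

theorem exists_isChild_of_one_lt_degree [Fintype (G.neighborSet v)] (hG : G.IsAcyclic)
    (hr : G.Reachable r v) (hv : 1 < G.degree v) : ∃ w, IsChild G r v w := by
  obtain ⟨a, ha, b, hb, hab⟩ := one_lt_card.1 (G.card_neighborFinset_eq_degree v ▸ hv)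
  rw [mem_neighborFinset] at ha hb
  rcases isChild_or_isChild_of_adj hG hr ha with h | hav
  · exact ⟨a, h⟩
  rcases isChild_or_isChild_of_adj hG hr hb with h | hbv
  · exact ⟨b, h⟩
  exact absurd (hav.parent_unique hG hbv) hab

theorem not_adj_of_dist_modEq (hG : G.IsAcyclic) (hr : G.Reachable r u)
    (hmod : G.dist r u ≡ G.dist r v [MOD 3]) : ¬ G.Adj u v := by
  intro huv
  rw [Nat.ModEq] at hmod
  rcases isChild_or_isChild_of_adj hG hr huv with ⟨-, hdist⟩ | ⟨-, hdist⟩ <;> omega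

theorem IsChild.ne_and_not_adj_child (hG : G.IsAcyclic) (hr : G.Reachable r u)
    (hvx : IsChild G r v x) (huv : u ≠ v) (hmod : G.dist r u ≡ G.dist r v [MOD 3]) :
    u ≠ x ∧ ¬ G.Adj u x := by
  have hdist := hvx.2
  rw [Nat.ModEq] at hmod
  refine ⟨?_, fun hux => ?_⟩
  · rintro rfl
    omega
  · rcases isChild_or_isChild_of_adj hG hr hux with hchild | ⟨-, hdist'⟩
    · exact huv (hchild.parent_unique hG hvx)
    · omega

theorem IsChild.ne_and_not_adj_of_dist_modEq (hG : G.IsAcyclic) (huw : IsChild G r u w)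
    (hvx : IsChild G r v x) (huv : u ≠ v) (hmod : G.dist r u ≡ G.dist r v [MOD 3])
    {a b : V} (ha : a ∈ s(u, w)) (hb : b ∈ s(v, x)) : a ≠ b ∧ ¬ G.Adj a b := by
  rcases Sym2.mem_iff.1 ha with rfl | rfl <;> rcases Sym2.mem_iff.1 hb with rfl | rfl
  · exact ⟨huv, not_adj_of_dist_modEq hG huw.reachable hmod⟩
  · exact hvx.ne_and_not_adj_child hG huw.reachable huv hmod
  · exact (huw.ne_and_not_adj_child hG hvx.reachable huv.symm hmod.symm).imp Ne.symm
      (mt Adj.symm)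
  · have child_modEq : G.dist r a ≡ G.dist r b [MOD 3] := by
      rw [huw.2, hvx.2]
      exact hmod.add_right 1
    refine ⟨?_, not_adj_of_dist_modEq hG (huw.reachable.trans huw.1.reachable) child_modEq⟩
    rintro rfl
    exact huv (huw.parent_unique hG hvx)

theorem card_le_inducedMatchingNum_of_dist_modEq [Finite V] (hG : G.IsAcyclic) {s : Finset V}
    (hchild : ∀ v ∈ s, ∃ w, IsChild G r v w)
    (hmod : ∀ u ∈ s, ∀ v ∈ s, G.dist r u ≡ G.dist r v [MOD 3]) :
    #s ≤ G.inducedMatchingNum := by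
  choose! c hc using hchild
  exact card_le_inducedMatchingNum_of_pairwise (e := fun v => s(v, c v))
    (fun v hv => (hc v hv).1) fun u hu v hv huv a ha b hb =>
      (hc u hu).ne_and_not_adj_of_dist_modEq hG (hc v hv) huv (hmod u hu v hv) ha hb

theorem card_le_three_mul_inducedMatchingNum [Finite V] (hG : G.IsAcyclic) {s : Finset V}
    (hchild : ∀ v ∈ s, ∃ w, IsChild G r v w) : #s ≤ 3 * G.inducedMatchingNum := by
  have dist_mod_mem : ∀ v ∈ s, G.dist r v % 3 ∈ range 3 := fun v _ =>
    mem_range.2 (Nat.mod_lt _ three_pos)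
  rw [mul_comm, ← card_range 3]
  refine card_le_mul_card_image_of_maps_to dist_mod_mem _ fun i _ => ?_
  refine card_le_inducedMatchingNum_of_dist_modEq hG
    (fun v hv => hchild v (mem_filter.1 hv).1) fun u hu v hv => ?_
  exact (mem_filter.1 hu).2.trans (mem_filter.1 hv).2.symm

end Child

section Degree

open Finset

variable {V : Type*} {G : SimpleGraph V}

theorem one_lt_degree_getVert_of_isPath {u v : V} {p : G.Walk u v} (hp : p.IsPath) {i : ℕ}
    (hi₀ : 0 < i) (hi : i < p.length) [Fintype (G.neighborSet (p.getVert i))] :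
    1 < G.degree (p.getVert i) := by
  obtain ⟨j, rfl⟩ := Nat.exists_eq_add_one_of_ne_zero hi₀.ne'
  have adj_prev : G.Adj (p.getVert (j + 1)) (p.getVert j) :=
    (p.adj_getVert_succ (by omega)).symm
  have adj_next : G.Adj (p.getVert (j + 1)) (p.getVert (j + 2)) := p.adj_getVert_succ hi
  have prev_ne_next : p.getVert j ≠ p.getVert (j + 2) := fun h => by
    have := hp.getVert_injOn (by simp; omega) (by simp; omega) h
    omega
  rw [← card_neighborFinset_eq_degree, one_lt_card]
  exact ⟨_, by simpa using adj_prev, _, by simpa using adj_next, prev_ne_next⟩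

variable [Fintype V] [DecidableRel G.Adj]

theorem length_le_card_degree_ne_one_add_one {u v : V} {p : G.Walk u v} (hp : p.IsPath) :
    p.length ≤ #{x | G.degree x ≠ 1} + 1 := by
  have interior_injOn : Set.InjOn p.getVert (Ioo 0 p.length) :=
    hp.getVert_injOn.mono fun i hi => (mem_Ioo.1 hi).2.le
  have interior_mapsTo : Set.MapsTo p.getVert (Ioo 0 p.length) {x | G.degree x ≠ 1} := fun i hi =>
    (one_lt_degree_getVert_of_isPath hp (mem_Ioo.1 hi).1 (mem_Ioo.1 hi).2).ne'
  have card_interior_le := card_le_card_of_injOn (t := {x | G.degree x ≠ 1}) p.getVert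
    (by simpa using interior_mapsTo) interior_injOn
  rw [Nat.card_Ioo] at card_interior_le
  omega

theorem diam_le_card_degree_ne_one_add_one (hG : G.Connected) :
    G.diam ≤ #{v | G.degree v ≠ 1} + 1 := by
  have := hG.nonempty
  obtain ⟨u, v, huv⟩ := G.exists_dist_eq_diam
  obtain ⟨p, hp, hlen⟩ := hG.exists_path_of_dist u v
  exact huv ▸ hlen ▸ length_le_card_degree_ne_one_add_one hp

theorem card_degree_ne_one_add_one_le_three_mul_inducedMatchingNum [Nontrivial V]
    (hG : G.IsTree) : #{v | G.degree v ≠ 1} + 1 ≤ 3 * G.inducedMatchingNum := by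
  classical
  obtain ⟨r, hr⟩ := hG.exists_vert_degree_one_of_nontrivial
  rw [← card_insert_of_notMem (a := r) (by simpa using hr)]
  refine card_le_three_mul_inducedMatchingNum (r := r) hG.isAcyclic fun v hv => ?_
  rcases mem_insert.1 hv with rfl | hv
  · exact exists_isChild_root hG.connected v
  · have degree_pos := hG.connected.preconnected.degree_pos_of_nontrivial v
    have degree_ne_one := (mem_filter.1 hv).2
    exact exists_isChild_of_one_lt_degree hG.isAcyclic (hG.connected r v) (by omega)

theorem pendantCount_add_card_degree_ne_one (G : SimpleGraph V) [DecidableRel G.Adj] :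
    G.pendantCount + #{v | G.degree v ≠ 1} = Fintype.card V := by
  rw [pendantCount, Set.ncard_eq_toFinset_card', Set.toFinset_ofPred,
    card_filter_add_card_filter_not, card_univ]

end Degree

/-- Lower bound for the induced matching number of a tree:
`im(T) ≥ ⌊(n − p + d + 5)/6⌋`. -/
theorem tree_im_lower_bound {V : Type*} [Fintype V] (G : SimpleGraph V)
    [DecidableRel G.Adj] (hT : G.IsTree)
    (n d p : ℕ) (hn : n = Fintype.card V) (hn2 : 2 ≤ n)
    (hd : d = G.diam) (hp : p = G.pendantCount) :
    ⌊(((n : ℚ) - p + d + 5) / 6 : ℚ)⌋ ≤ (G.inducedMatchingNum : ℤ) := by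
  have : Nontrivial V := Fintype.one_lt_card_iff_nontrivial.1 (hn ▸ hn2)
  have matching_bound := card_degree_ne_one_add_one_le_three_mul_inducedMatchingNum hT
  have diam_bound := diam_le_card_degree_ne_one_add_one hT.connected
  have vertex_count := pendantCount_add_card_degree_ne_one G
  have nat_bound : n + d + 1 ≤ 6 * G.inducedMatchingNum + p := by omega
  have rat_bound : (n : ℚ) + d + 1 ≤ 6 * G.inducedMatchingNum + p := by exact_mod_cast nat_bound
  rw [← Int.lt_add_one_iff, Int.floor_lt]
  push_cast
  linarith
end

section
/- Let T be a tree on n ≥ 2 vertices with diameter d. Then the independence number of T satisfies α(T) ≤ ⌈(2n − d − 1)/2⌉. -/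
open SimpleGraph

/-- The independence number of `G`: the maximum size of a set of pairwise
non-adjacent vertices. -/
noncomputable def SimpleGraph.indepNumber {V : Type*} (G : SimpleGraph V) : ℕ :=
  sSup {n | ∃ s : Finset V, (∀ u ∈ s, ∀ v ∈ s, ¬ G.Adj u v) ∧ s.card = n}

/-! The complement `c` of a maximum independent set is a vertex cover. Any two consecutive
vertices of a walk include one in `c`, so a walk visits `c` at least once for every two of its
edges. A path visits each vertex of `c` at most once, hence has length at most `2 * |c|`; for a
geodesic realising the diameter this reads `d ≤ 2 * (n - α)`. -/

section VertexCover

variable {V : Type*} {G : SimpleGraph V}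

theorem walk_length_le_two_mul_countP_of_isVertexCover {c : Set V} [DecidablePred (· ∈ c)]
    (hc : G.IsVertexCover c) {u v : V} : ∀ p : G.Walk u v,
    p.length ≤ 2 * p.support.countP (· ∈ c)
  | .nil => by simp only [Walk.length_nil, Nat.zero_le]
  | .cons h .nil => by
    have edge_covered := hc h
    grind [Walk.length_cons, Walk.length_nil, Walk.support_cons, Walk.support_nil]
  | .cons h (.cons _ p) => by
    have edge_covered := hc h
    have rest_bound := walk_length_le_two_mul_countP_of_isVertexCover hc p
    grind [Walk.length_cons, Walk.support_cons]

theorem path_length_le_two_mul_card_of_isVertexCover {c : Finset V} (hc : G.IsVertexCover c)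
    {u v : V} {p : G.Walk u v} (hp : p.IsPath) : p.length ≤ 2 * c.card := by
  classical
  have visits_le : p.support.countP (· ∈ c) ≤ c.card := by
    rw [List.countP_eq_length_filter, ← List.toFinset_card_of_nodup (hp.support_nodup.filter _)]
    refine Finset.card_le_card fun w hw ↦ ?_
    simpa only [decide_eq_true_eq] using List.of_mem_filter (List.mem_toFinset.mp hw)
  calc p.length
      ≤ 2 * p.support.countP (· ∈ c) := walk_length_le_two_mul_countP_of_isVertexCover hc p
    _ ≤ 2 * c.card := Nat.mul_le_mul_left 2 visits_le

theorem diam_le_two_mul_card_of_isVertexCover (hG : G.Connected) {c : Finset V}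
    (hc : G.IsVertexCover c) : G.diam ≤ 2 * c.card := by
  have := hG.nonempty
  obtain ⟨u, v, huv⟩ := G.exists_dist_eq_diam
  obtain ⟨p, hp, hlen⟩ := hG.exists_path_of_dist u v
  rw [← huv, ← hlen]
  exact path_length_le_two_mul_card_of_isVertexCover hc hp

end VertexCover

section IndepNumber

variable {V : Type*}

theorem indepNumber_eq_indepNum (G : SimpleGraph V) : G.indepNumber = G.indepNum := by
  have indep_iff (s : Finset V) : (∀ u ∈ s, ∀ v ∈ s, ¬ G.Adj u v) ↔ G.IsIndepSet s :=
    ⟨fun h u hu v hv _ ↦ h u hu v hv, fun h u hu v hv huv ↦ h hu hv huv.ne huv⟩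
  simp only [indepNumber, indepNum, isNIndepSet_iff, indep_iff]

variable [Fintype V] {G : SimpleGraph V}

theorem two_mul_indepNum_add_diam_le_two_mul_card (hG : G.Connected) :
    2 * G.indepNum + G.diam ≤ 2 * Fintype.card V := by
  classical
  obtain ⟨s, hs⟩ := G.exists_isNIndepSet_indepNum
  have cover : G.IsVertexCover (sᶜ : Finset V) := by
    rw [Finset.coe_compl, isVertexCover_compl]
    exact hs.isIndepSet
  have diam_le := diam_le_two_mul_card_of_isVertexCover hG cover
  have card_add := s.card_add_card_compl
  rw [hs.card_eq] at card_add
  omega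

theorem tree_indepNumber_le_ceil_general (hG : G.Connected) :
    (G.indepNumber : ℤ) ≤ ⌈((2 * (Fintype.card V : ℚ) - G.diam - 1) / 2 : ℚ)⌉ := by
  have bound : (2 * G.indepNum + G.diam : ℚ) ≤ 2 * Fintype.card V :=
    mod_cast two_mul_indepNum_add_diam_le_two_mul_card hG
  rw [indepNumber_eq_indepNum, Int.le_ceil_iff, Int.cast_natCast]
  linarith

end IndepNumber

/-- Upper bound for the independence number of a tree:
`α(T) ≤ ⌈(2n − d − 1)/2⌉`. -/
theorem tree_indepNumber_le_ceil {V : Type*} [Fintype V] (G : SimpleGraph V)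
    (hT : G.IsTree)
    (n d : ℕ) (hn : n = Fintype.card V) (hn2 : 2 ≤ n) (hd : d = G.diam) :
    (G.indepNumber : ℤ) ≤ ⌈((2 * (n : ℚ) - d - 1) / 2 : ℚ)⌉ := by
  subst hn hd
  exact tree_indepNumber_le_ceil_general hT.connected
end

section
/- Let G be a finite simple graph on n ≥ 2 vertices, let G₁ be the whiskered graph obtained by attaching one new pendant vertex to each vertex of G, and let G_a be the multi-whiskered graph obtained by attaching a_i ≥ 1 new pendant vertices to the i-th vertex of G, for an arbitrary vector a of positive integers. Then the induced matching numbers coincide: im(G₁) = im(G_a). -/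
open SimpleGraph

/-- The whiskered graph `G₁`: attach one new pendant vertex to each vertex of `G`. -/
def SimpleGraph.whisker {V : Type*} (G : SimpleGraph V) : SimpleGraph (V ⊕ V) :=
  SimpleGraph.fromRel fun x y =>
    match x, y with
    | Sum.inl u, Sum.inl v => G.Adj u v
    | Sum.inl u, Sum.inr v => u = v
    | _, _ => False

/-- The multi-whiskered graph `G_a`: attach `a v` new pendant vertices to each vertex `v`
of `G`. -/
def SimpleGraph.multiWhisker {V : Type*} (G : SimpleGraph V) (a : V → ℕ) :
    SimpleGraph (V ⊕ Σ v : V, Fin (a v)) :=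
  SimpleGraph.fromRel fun x y =>
    match x, y with
    | Sum.inl u, Sum.inl v => G.Adj u v
    | Sum.inl u, Sum.inr w => u = w.1
    | _, _ => False

/-!
An induced matching stays an induced matching of the same size under a map that preserves and
reflects adjacency, even a non-injective one: two vertices with the same image have the same
neighbours, so if endpoints `u` and `v` of distinct edges of the matching had the same image, the
partner of `u` would be adjacent to `v`. Collapsing all whiskers at each vertex to one is such a map
from `G_a` to `G₁`, and choosing one whisker at each vertex is such a map from `G₁` to `G_a`.
-/

section Comap

variable {V W : Type*} {H : SimpleGraph W} {φ : V → W} {M : Finset (Sym2 V)}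

theorem map_ne_map_of_isInducedMatching_comap (hM : (H.comap φ).IsInducedMatching M)
    {e f : Sym2 V} (he : e ∈ M) (hf : f ∈ M) (hef : e ≠ f) {u v : V} (hu : u ∈ e) (hv : v ∈ f) :
    φ u ≠ φ v := by
  intro huv
  obtain ⟨w, rfl⟩ := Sym2.mem_iff_exists.1 hu
  have huw : H.Adj (φ u) (φ w) := hM.1 _ he
  have hwv : H.Adj (φ w) (φ v) := huv ▸ huw.symm
  exact (hM.2 _ he f hf hef w (Sym2.mem_mk_right u w) v hv).2 hwv

theorem injOn_sym2Map_of_isInducedMatching_comap (hM : (H.comap φ).IsInducedMatching M) :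
    Set.InjOn (Sym2.map φ) M := by
  intro e he f hf hmap
  by_contra hef
  have hmem : φ e.out.1 ∈ Sym2.map φ f := hmap ▸ Sym2.mem_map.2 ⟨_, e.out_fst_mem, rfl⟩
  obtain ⟨v, hv, hvu⟩ := Sym2.mem_map.1 hmem
  exact map_ne_map_of_isInducedMatching_comap hM he hf hef e.out_fst_mem hv hvu.symm

theorem isInducedMatching_image_of_comap [DecidableEq W]
    (hM : (H.comap φ).IsInducedMatching M) : H.IsInducedMatching (M.image (Sym2.map φ)) := by
  simp only [SimpleGraph.IsInducedMatching, Finset.forall_mem_image]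
  refine ⟨fun e he => (SimpleGraph.Hom.comap φ H).map_mem_edgeSet (hM.1 e he), ?_⟩
  intro e he f hf hmap u' hu' v' hv'
  obtain ⟨u, hu, rfl⟩ := Sym2.mem_map.1 hu'
  obtain ⟨v, hv, rfl⟩ := Sym2.mem_map.1 hv'
  have hef : e ≠ f := ne_of_apply_ne _ hmap
  exact ⟨map_ne_map_of_isInducedMatching_comap hM he hf hef hu hv,
    (hM.2 e he f hf hef u hu v hv).2⟩

theorem exists_isInducedMatching_card_eq_of_comap {n : ℕ}
    (h : ∃ M : Finset (Sym2 V), (H.comap φ).IsInducedMatching M ∧ M.card = n) :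
    ∃ M : Finset (Sym2 W), H.IsInducedMatching M ∧ M.card = n := by
  classical
  obtain ⟨M, hM, rfl⟩ := h
  exact ⟨M.image (Sym2.map φ), isInducedMatching_image_of_comap hM,
    Finset.card_image_of_injOn (injOn_sym2Map_of_isInducedMatching_comap hM)⟩

end Comap

section Whisker

variable {V : Type*} (G : SimpleGraph V)

theorem multiWhisker_eq_comap_whisker (a : V → ℕ) :
    G.multiWhisker a = G.whisker.comap (Sum.map id Sigma.fst) := by
  ext (u | u) (v | v) <;> simp [SimpleGraph.whisker, SimpleGraph.multiWhisker]

theorem whisker_eq_comap_multiWhisker {a : V → ℕ} (s : ∀ v, Fin (a v)) :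
    G.whisker = (G.multiWhisker a).comap (Sum.map id fun v => ⟨v, s v⟩) := by
  ext (u | u) (v | v) <;> simp [SimpleGraph.whisker, SimpleGraph.multiWhisker]

/-- Stated for each size rather than for the suprema, because on an infinite graph the sizes may be
unbounded, and then `sSup` is the junk value `0`. -/
theorem whisker_im_eq_multiWhisker_im_general (a : V → ℕ) (ha : ∀ v, 1 ≤ a v) (n : ℕ) :
    (∃ M : Finset (Sym2 (V ⊕ V)), G.whisker.IsInducedMatching M ∧ M.card = n) ↔
      ∃ M : Finset (Sym2 (V ⊕ Σ v, Fin (a v))), (G.multiWhisker a).IsInducedMatching M ∧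
        M.card = n := by
  constructor
  · intro h
    rw [whisker_eq_comap_multiWhisker G fun v => ⟨0, ha v⟩] at h
    exact exists_isInducedMatching_card_eq_of_comap h
  · intro h
    rw [multiWhisker_eq_comap_whisker] at h
    exact exists_isInducedMatching_card_eq_of_comap h

end Whisker

/-- The induced matching number of the whiskered graph equals that of any
multi-whiskered graph: `im(G₁) = im(G_a)`. -/
theorem whisker_im_eq_multiWhisker_im {V : Type*} [Fintype V] (G : SimpleGraph V)
    (hn2 : 2 ≤ Fintype.card V) (a : V → ℕ) (ha : ∀ v, 1 ≤ a v) :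
    G.whisker.inducedMatchingNum = (G.multiWhisker a).inducedMatchingNum :=
  congrArg sSup (Set.ext (whisker_im_eq_multiWhisker_im_general G a ha))
end
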